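/- Let s and e be composable, utrace-closed labelled transition systems, let σ ∈ (L_{s∥e}^δ)*, and let q_s, q_s' ∈ Q_s, q_e, q_e' ∈ Q_e. Then (s ∥ e ==σ==> q_s ∥ q_e and s ∥ e ==σ==> q_s' ∥ q_e') if and only if (s ∥ e ==σ==> q_s ∥ q_e' and s ∥ e ==σ==> q_s' ∥ q_e). -/

import Mathlib

/-- Labels extended with the quiescence label `δ`. -/
inductive ELabel (Lab : Type) : Type
  | lab : Lab → ELabel Lab
  | delta : ELabel Lab

namespace ELabel

/-- Membership of an extended label in `𝓛^δ = 𝓛 ∪ {δ}`. -/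
def inL {Lab : Type} (Ls : Set Lab) : ELabel Lab → Prop
  | lab ℓ => ℓ ∈ Ls
  | delta => True

end ELabel

/-- A trace lies in `(𝓛^δ)*`. -/
def TraceIn {Lab : Type} (Ls : Set Lab) (σ : List (ELabel Lab)) : Prop :=
  ∀ x ∈ σ, ELabel.inL Ls x

/-- A labelled transition system.  `T q none q'` is an internal `τ`-step,
`T q (some ℓ) q'` is a step labelled `ℓ`. -/
structure LTS (Q : Type) (Lab : Type) where
  I : Set Lab
  U : Set Lab
  T : Q → Option Lab → Q → Prop
  q0 : Q

namespace LTS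

variable {Q Lab : Type}

/-- The label set `L = I ∪ U`. -/
def L (M : LTS Q Lab) : Set Lab := M.I ∪ M.U

/-- Standing assumptions on all LTSs: countable, disjoint input/output label
sets, transitions labelled within `L`, strong convergence (no infinite
`τ`-sequences), and image-finiteness. -/
def WellFormed (M : LTS Q Lab) : Prop :=
  M.I.Countable ∧ M.U.Countable ∧ Disjoint M.I M.U ∧
  (∀ q ℓ q', M.T q (some ℓ) q' → ℓ ∈ M.L) ∧
  (¬ ∃ f : ℕ → Q, ∀ n, M.T (f n) none (f (n + 1))) ∧
  (∀ q a, {q' | M.T q a q'}.Finite)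

/-- A state is quiescent if neither an output nor `τ` is enabled in it. -/
def Quiescent (M : LTS Q Lab) (q : Q) : Prop :=
  (∀ x ∈ M.U, ∀ q', ¬ M.T q (some x) q') ∧ ∀ q', ¬ M.T q none q'

/-- A single visible step `q --x--> q'` for `x ∈ L^δ`, where the quiescence
label `δ` gives a self-loop at quiescent states. -/
def VStep (M : LTS Q Lab) (q : Q) : ELabel Lab → Q → Prop
  | .lab ℓ, q' => M.T q (some ℓ) q'
  | .delta, q' => q' = q ∧ M.Quiescent q

/-- Zero or more `τ`-steps: `q ==ε==> q'`. -/
def Eps (M : LTS Q Lab) : Q → Q → Prop :=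
  Relation.ReflTransGen fun a b => M.T a none b

/-- Weak transition `q ==σ==> q'` for `σ ∈ (L^δ)*`. -/
inductive W (M : LTS Q Lab) : Q → List (ELabel Lab) → Q → Prop
  | nil {q q' : Q} : M.Eps q q' → W M q [] q'
  | snoc {q q1 q2 q' : Q} {σ : List (ELabel Lab)} {x : ELabel Lab} :
      W M q σ q1 → M.VStep q1 x q2 → M.Eps q2 q' → W M q (σ ++ [x]) q'

/-- `X after σ`, for a set of states `X`. -/
def afterSet (M : LTS Q Lab) (X : Set Q) (σ : List (ELabel Lab)) : Set Q :=
  {q' | ∃ q ∈ X, M.W q σ q'}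

/-- `M after σ`, from the initial state. -/
def after (M : LTS Q Lab) (σ : List (ELabel Lab)) : Set Q :=
  {q' | M.W M.q0 σ q'}

/-- The predicate underlying `out(q) ⊆ U ∪ {δ}`. -/
def outLabel (M : LTS Q Lab) (q : Q) : ELabel Lab → Prop
  | .lab ℓ => ℓ ∈ M.U ∧ ∃ q', M.T q (some ℓ) q'
  | .delta => M.Quiescent q

/-- `out(q)`. -/
def outq (M : LTS Q Lab) (q : Q) : Set (ELabel Lab) :=
  {x | M.outLabel q x}

/-- `in(q) = {ℓ ∈ I | q ==ℓ==>}`. -/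
def inq (M : LTS Q Lab) (q : Q) : Set Lab :=
  {ℓ | ℓ ∈ M.I ∧ ∃ q', M.W q [ELabel.lab ℓ] q'}

/-- `out(X) = ⋃_{q ∈ X} out(q)`. -/
def outSet (M : LTS Q Lab) (X : Set Q) : Set (ELabel Lab) :=
  ⋃ q ∈ X, M.outq q

/-- `in(X) = ⋂_{q ∈ X} in(q)`. -/
def inSet (M : LTS Q Lab) (X : Set Q) : Set Lab :=
  ⋂ q ∈ X, M.inq q

/-- Input-enabledness: `M` is an IOTS. -/
def InputEnabled (M : LTS Q Lab) : Prop :=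
  ∀ q, ∀ ℓ ∈ M.I, ∃ q', M.W q [ELabel.lab ℓ] q'

/-- `Utraces(M)`. -/
def Utraces (M : LTS Q Lab) : Set (List (ELabel Lab)) :=
  {σ | TraceIn M.L σ ∧ (∃ q', M.W M.q0 σ q') ∧
    ∀ σ1 ℓ σ2, σ = σ1 ++ ELabel.lab ℓ :: σ2 → ℓ ∈ M.I →
      ∀ q, M.W M.q0 σ1 q → ∃ q', M.W q [ELabel.lab ℓ] q'}

/-- An LTS is utrace-closed when every trace over `(L^δ)*` that it can
perform is a utrace. -/
def UtraceClosed (M : LTS Q Lab) : Prop :=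
  ∀ σ : List (ELabel Lab), TraceIn M.L σ → (∃ q', M.W M.q0 σ q') → σ ∈ M.Utraces

end LTS

/-- `i uioco s`. -/
def Uioco {Qi Qs Lab : Type} (i : LTS Qi Lab) (s : LTS Qs Lab) : Prop :=
  ∀ σ ∈ s.Utraces, i.outSet (i.after σ) ⊆ s.outSet (s.after σ)

/-- Composability: disjoint output label sets. -/
def Composable {Qs Qe Lab : Type} (s : LTS Qs Lab) (e : LTS Qe Lab) : Prop :=
  s.U ∩ e.U = ∅

/-- Parallel composition `s ∥ e`. -/
def par {Qs Qe Lab : Type} (s : LTS Qs Lab) (e : LTS Qe Lab) : LTS (Qs × Qe) Lab where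
  I := (s.I \ e.U) ∪ (e.I \ s.U)
  U := s.U ∪ e.U
  T := fun p a p' =>
    match a with
    | none =>
        (s.T p.1 none p'.1 ∧ p'.2 = p.2) ∨ (e.T p.2 none p'.2 ∧ p'.1 = p.1)
    | some ℓ =>
        (ℓ ∈ s.L ∧ ℓ ∉ e.L ∧ s.T p.1 (some ℓ) p'.1 ∧ p'.2 = p.2) ∨
        (ℓ ∈ e.L ∧ ℓ ∉ s.L ∧ e.T p.2 (some ℓ) p'.2 ∧ p'.1 = p.1) ∨
        (ℓ ∈ s.L ∧ ℓ ∈ e.L ∧ s.T p.1 (some ℓ) p'.1 ∧ e.T p.2 (some ℓ) p'.2)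
  q0 := (s.q0, e.q0)

/-- `s accepts e`: along utraces of `s ∥ e`, every output of `e` that is an
input of `s` is (weakly) enabled in `s`. -/
def Accepts {Qs Qe Lab : Type} (s : LTS Qs Lab) (e : LTS Qe Lab) : Prop :=
  ∀ σ ∈ (par s e).Utraces, ∀ qs qe, (par s e).W (par s e).q0 σ (qs, qe) →
    ∀ ℓ, ELabel.lab ℓ ∈ e.outq qe → ℓ ∈ s.I → ℓ ∈ s.inq qs

/-- `s mutually accepts e`. -/
def MutuallyAccepts {Qs Qe Lab : Type} (s : LTS Qs Lab) (e : LTS Qe Lab) : Prop :=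
  Accepts s e ∧ Accepts e s

/-- `R` is an ecosim for `s` and `e`. -/
def IsEcosim {Qs Qe Lab : Type} (s : LTS Qs Lab) (e : LTS Qe Lab)
    (R : Set (Set Qs × Set Qe)) : Prop :=
  (s.after [], e.after []) ∈ R ∧
  ∀ Xs Xe, (Xs, Xe) ∈ R →
    (∀ ℓ, ELabel.lab ℓ ∈ e.outSet Xe → ℓ ∈ s.I →
      ℓ ∈ s.inSet Xs ∧
        (s.afterSet Xs [ELabel.lab ℓ], e.afterSet Xe [ELabel.lab ℓ]) ∈ R) ∧
    (∀ ℓ, ELabel.lab ℓ ∈ s.outSet Xs → ℓ ∈ e.I →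
      ℓ ∈ e.inSet Xe ∧
        (s.afterSet Xs [ELabel.lab ℓ], e.afterSet Xe [ELabel.lab ℓ]) ∈ R) ∧
    (∀ ℓ, (ELabel.lab ℓ ∈ e.outSet Xe ∨ ℓ ∈ e.inSet Xe) → ℓ ∉ s.L →
      (Xs, e.afterSet Xe [ELabel.lab ℓ]) ∈ R) ∧
    (∀ ℓ, (ELabel.lab ℓ ∈ s.outSet Xs ∨ ℓ ∈ s.inSet Xs) → ℓ ∉ e.L →
      (s.afterSet Xs [ELabel.lab ℓ], Xe) ∈ R) ∧
    (∀ ℓ, ℓ ∈ s.inSet Xs → ℓ ∈ e.inSet Xe →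
      (s.afterSet Xs [ELabel.lab ℓ], e.afterSet Xe [ELabel.lab ℓ]) ∈ R) ∧
    (ELabel.delta ∈ s.outSet Xs → ELabel.delta ∈ e.outSet Xe →
      (s.afterSet Xs [ELabel.delta], e.afterSet Xe [ELabel.delta]) ∈ R)

/-- `s eco e`: there exists an ecosim for `s` and `e`. -/
def Eco {Qs Qe Lab : Type} (s : LTS Qs Lab) (e : LTS Qe Lab) : Prop :=
  ∃ R, IsEcosim s e R

/-- `R_U(s,e)`: the smallest relation closed under the given rules. -/
inductive RU {Qs Qe Lab : Type} (s : LTS Qs Lab) (e : LTS Qe Lab) :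
    Set Qs → Set Qe → Prop
  | base : RU s e (s.after []) (e.after [])
  | syncOutE {Xs : Set Qs} {Xe : Set Qe} (ℓ : Lab) :
      RU s e Xs Xe → ELabel.lab ℓ ∈ e.outSet Xe → ℓ ∈ s.I →
      RU s e (s.afterSet Xs [ELabel.lab ℓ]) (e.afterSet Xe [ELabel.lab ℓ])
  | syncOutS {Xs : Set Qs} {Xe : Set Qe} (ℓ : Lab) :
      RU s e Xs Xe → ELabel.lab ℓ ∈ s.outSet Xs → ℓ ∈ e.I →
      RU s e (s.afterSet Xs [ELabel.lab ℓ]) (e.afterSet Xe [ELabel.lab ℓ])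
  | internalE {Xs : Set Qs} {Xe : Set Qe} (ℓ : Lab) :
      RU s e Xs Xe → (ELabel.lab ℓ ∈ e.outSet Xe ∨ ℓ ∈ e.inSet Xe) → ℓ ∉ s.L →
      RU s e Xs (e.afterSet Xe [ELabel.lab ℓ])
  | internalS {Xs : Set Qs} {Xe : Set Qe} (ℓ : Lab) :
      RU s e Xs Xe → (ELabel.lab ℓ ∈ s.outSet Xs ∨ ℓ ∈ s.inSet Xs) → ℓ ∉ e.L →
      RU s e (s.afterSet Xs [ELabel.lab ℓ]) Xe
  | syncIn {Xs : Set Qs} {Xe : Set Qe} (ℓ : Lab) :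
      RU s e Xs Xe → ℓ ∈ s.inSet Xs → ℓ ∈ e.inSet Xe →
      RU s e (s.afterSet Xs [ELabel.lab ℓ]) (e.afterSet Xe [ELabel.lab ℓ])
  | qdelta {Xs : Set Qs} {Xe : Set Qe} :
      RU s e Xs Xe → ELabel.delta ∈ s.outSet Xs → ELabel.delta ∈ e.outSet Xe →
      RU s e (s.afterSet Xs [ELabel.delta]) (e.afterSet Xe [ELabel.delta])

open Classical in
/-- Projection `σ↾𝓛^δ` of a trace onto an (extended) label set: keeps `δ`
and the labels in `Ls`, removes all other labels. -/
noncomputable def projD {Lab : Type} (σ : List (ELabel Lab)) (Ls : Set Lab) :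
    List (ELabel Lab) :=
  σ.filter fun x => decide (ELabel.inL Ls x)

open Classical in
/-- Projection `σ↾𝓛` of a trace of plain labels onto a label set. -/
noncomputable def projL {Lab : Type} (σ : List Lab) (Ls : Set Lab) : List Lab :=
  σ.filter fun ℓ => decide (ℓ ∈ Ls)

open Classical in
/-- Substitution `σ[θ/δ]` of the label `θ` by the quiescence label `δ`. -/
noncomputable def substTheta {Lab : Type} (θ : Lab) (σ : List Lab) :
    List (ELabel Lab) :=
  σ.map fun ℓ => if ℓ = θ then ELabel.delta else ELabel.lab ℓ

/-- `⟨X⟩`: componentwise collection of a set of pairs of states. -/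
def collect {Qs Qe : Type} (X : Set (Qs × Qe)) : Set Qs × Set Qe :=
  (Prod.fst '' X, Prod.snd '' X)

/-- `q_s accepts q_e over σ`. -/
def AcceptsOver {Qs Qe Lab : Type} (s : LTS Qs Lab) (e : LTS Qe Lab)
    (qs : Qs) (qe : Qe) (σ : List (ELabel Lab)) : Prop :=
  ∀ σ1 σ2 : List (ELabel Lab), σ1 ++ σ2 = σ →
    ∀ (qs' : Qs) (qe' : Qe), (par s e).W (qs, qe) σ1 (qs', qe') →
      ∀ ℓ, ELabel.lab ℓ ∈ e.outq qe' → ℓ ∈ s.I → ℓ ∈ s.inq qs' ∧ ℓ ∈ e.U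

/-- `q_s mutually accepts q_e over σ`. -/
def MutuallyAcceptsOver {Qs Qe Lab : Type} (s : LTS Qs Lab) (e : LTS Qe Lab)
    (qs : Qs) (qe : Qe) (σ : List (ELabel Lab)) : Prop :=
  AcceptsOver s e qs qe σ ∧ AcceptsOver e s qe qs σ

/-- A test case: a quasi-finite tree-shaped LTS without `τ`-transitions, with
terminal states `pass` and `fail` carrying input self-loops, a special
quiescence-observation input `θ`, at most one output transition per state,
and receptive to all inputs other than `θ`. -/
structure TestCase (Qt Lab : Type) extends LTS Qt Lab where
  passS : Qt
  failS : Qt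
  theta : Lab
  theta_input : theta ∈ I
  no_tau : ∀ q q', ¬ T q none q'
  tree : ∀ q, q ≠ q0 → q ≠ passS → q ≠ failS →
    ∃! p : Qt × Option Lab, T p.1 p.2 q
  pass_loops : ∀ ℓ ∈ I, T passS (some ℓ) passS
  pass_terminal : ∀ a q', T passS a q' → q' = passS ∧ ∃ ℓ ∈ I, a = some ℓ
  fail_loops : ∀ ℓ ∈ I, T failS (some ℓ) failS
  fail_terminal : ∀ a q', T failS a q' → q' = failS ∧ ∃ ℓ ∈ I, a = some ℓ
  one_output : ∀ q ℓ ℓ' q' q'', ℓ ∈ U → ℓ' ∈ U →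
    T q (some ℓ) q' → T q (some ℓ') q'' → ℓ = ℓ' ∧ q' = q''
  receptive : ∀ q, ∀ ℓ ∈ I, ℓ ≠ theta → ∃ q', T q (some ℓ) q'

/-- Test execution `t ⫿ i` of a test case `t` with an implementation `i`. -/
def testExec {Qt Qi Lab : Type} (t : TestCase Qt Lab) (i : LTS Qi Lab) :
    LTS (Qt × Qi) Lab where
  I := ∅
  U := i.U ∪ (t.toLTS.L \ {t.theta})
  T := fun p a p' =>
    match a with
    | none => i.T p.2 none p'.2 ∧ p'.1 = p.1
    | some ℓ =>
        (ℓ ∈ i.L ∧ ℓ ∉ t.toLTS.L ∧ i.T p.2 (some ℓ) p'.2 ∧ p'.1 = p.1) ∨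
        (ℓ ∈ t.toLTS.L ∧ ℓ ∉ i.L ∧ ℓ ≠ t.theta ∧ t.T p.1 (some ℓ) p'.1 ∧ p'.2 = p.2) ∨
        (ℓ ∈ i.L ∧ ℓ ∈ t.toLTS.L ∧ t.T p.1 (some ℓ) p'.1 ∧ i.T p.2 (some ℓ) p'.2) ∨
        (ℓ = t.theta ∧ t.T p.1 (some ℓ) p'.1 ∧ p'.2 = p.2 ∧ i.Quiescent p.2)
  q0 := (t.q0, i.q0)

open Classical in
/-- Projection of a trace onto a plain label set, dropping `δ`. -/
noncomputable def prj {Lab : Type} (Ls : Set Lab) (σ : List (ELabel Lab)) :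
    List (ELabel Lab) :=
  σ.filter fun x => decide (∃ ℓ ∈ Ls, x = ELabel.lab ℓ)

theorem prj_traceIn {Lab : Type} (Ls : Set Lab) (σ : List (ELabel Lab)) :
    TraceIn Ls (prj Ls σ) := by
  intro x hx
  simp only [prj, List.mem_filter, decide_eq_true_eq] at hx
  obtain ⟨_, ℓ, h, rfl⟩ := hx
  exact h

theorem prj_delta {Lab : Type} (Ls : Set Lab) (σ : List (ELabel Lab)) :
    prj Ls (σ ++ [ELabel.delta]) = prj Ls σ := by
  simp [prj]

theorem prj_mem {Lab : Type} (Ls : Set Lab) (σ : List (ELabel Lab)) (ℓ : Lab) (h : ℓ ∈ Ls) :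
    prj Ls (σ ++ [ELabel.lab ℓ]) = prj Ls σ ++ [ELabel.lab ℓ] := by
  simp [prj, h]

theorem prj_not_mem {Lab : Type} (Ls : Set Lab) (σ : List (ELabel Lab)) (ℓ : Lab) (h : ℓ ∉ Ls) :
    prj Ls (σ ++ [ELabel.lab ℓ]) = prj Ls σ := by
  simp [prj, h]

theorem W_nil_inv {Q Lab : Type} {M : LTS Q Lab} {q q' : Q} (h : M.W q [] q') :
    M.Eps q q' := by
  generalize hr : ([] : List (ELabel Lab)) = r at h
  cases h with
  | nil h => exact h
  | snoc _ _ _ => simp at hr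

theorem W_snoc_inv {Q Lab : Type} {M : LTS Q Lab} {q q' : Q} {σ : List (ELabel Lab)}
    {x : ELabel Lab} (h : M.W q (σ ++ [x]) q') :
    ∃ q1 q2, M.W q σ q1 ∧ M.VStep q1 x q2 ∧ M.Eps q2 q' := by
  generalize hr : σ ++ [x] = r at h
  cases h with
  | nil h => simp at hr
  | snoc h1 h2 h3 =>
    obtain ⟨rfl, hx⟩ := List.append_inj' hr rfl
    simp only [List.cons.injEq, and_true] at hx
    subst hx
    exact ⟨_, _, h1, h2, h3⟩

theorem W_eps {Q Lab : Type} {M : LTS Q Lab} {q q1 q' : Q} {σ : List (ELabel Lab)}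
    (h : M.W q σ q1) (h' : M.Eps q1 q') : M.W q σ q' := by
  cases h with
  | nil h => exact .nil (Relation.ReflTransGen.trans h h')
  | snoc h1 h2 h3 => exact .snoc h1 h2 (Relation.ReflTransGen.trans h3 h')

theorem eps_stable {Q Lab : Type} {M : LTS Q Lab} {q q' : Q}
    (hq : ∀ r, ¬ M.T q none r) (h : M.Eps q q') : q' = q := by
  rcases Relation.ReflTransGen.cases_head h with h | ⟨c, h, _⟩
  · exact h.symm
  · exact absurd h (hq c)

/-- If some state reachable by `σ` can do input `ℓ`, every stable one can. -/
theorem accept_stable {Q Lab : Type} {M : LTS Q Lab} (hM : M.UtraceClosed)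
    {σ : List (ELabel Lab)} (hσ : TraceIn M.L σ) {ℓ : Lab} (hℓ : ℓ ∈ M.I) {p p' r : Q}
    (hp : M.W M.q0 σ p) (hp' : M.W M.q0 σ p') (hr : M.T p' (some ℓ) r)
    (hst : ∀ r, ¬ M.T p none r) : ∃ r, M.T p (some ℓ) r := by
  have h := hM (σ ++ [ELabel.lab ℓ]) (by
    intro x hx
    rcases List.mem_append.1 hx with hx | hx
    · exact hσ x hx
    · rw [List.mem_singleton] at hx
      subst hx
      exact Or.inl hℓ) ⟨r, .snoc hp' (show M.VStep p' (.lab ℓ) r from hr) .refl⟩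
  obtain ⟨q', hq'⟩ := h.2.2 σ ℓ [] rfl hℓ p hp
  obtain ⟨q1, q2, h1, h2, _⟩ := W_snoc_inv (σ := []) hq'
  have := eps_stable hst (W_nil_inv h1)
  subst this
  exact ⟨q2, h2⟩

theorem par_eps {Qs Qe Lab : Type} {s : LTS Qs Lab} {e : LTS Qe Lab} {p p' : Qs × Qe} :
    (par s e).Eps p p' ↔ s.Eps p.1 p'.1 ∧ e.Eps p.2 p'.2 := by
  constructor
  · intro h
    induction h with
    | refl => exact ⟨.refl, .refl⟩
    | tail _ h ih =>
      rcases h with ⟨h, h'⟩ | ⟨h, h'⟩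
      · exact ⟨ih.1.tail h, h' ▸ ih.2⟩
      · exact ⟨h' ▸ ih.1, ih.2.tail h⟩
  · obtain ⟨a, b⟩ := p
    obtain ⟨a', b'⟩ := p'
    rintro ⟨h1, h2⟩
    have k1 : (par s e).Eps (a, b) (a', b) := by
      clear h2
      change s.Eps a a' at h1
      induction h1 with
      | refl => exact .refl
      | tail _ h ih => exact Relation.ReflTransGen.tail ih (Or.inl ⟨h, rfl⟩)
    have k2 : (par s e).Eps (a', b) (a', b') := by
      change e.Eps b b' at h2
      clear k1 h1
      induction h2 with
      | refl => exact .refl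
      | tail _ h ih => exact Relation.ReflTransGen.tail ih (Or.inr ⟨h, rfl⟩)
    exact Relation.ReflTransGen.trans k1 k2

theorem par_proj {Qs Qe Lab : Type} {s : LTS Qs Lab} {e : LTS Qe Lab}
    (σ : List (ELabel Lab)) : ∀ p : Qs × Qe, (par s e).W (par s e).q0 σ p →
    s.W s.q0 (prj s.L σ) p.1 ∧ e.W e.q0 (prj e.L σ) p.2 := by
  induction σ using List.reverseRecOn with
  | nil =>
    intro p h
    have := par_eps.1 (W_nil_inv h)
    exact ⟨.nil this.1, .nil this.2⟩
  | append_singleton σ x ih =>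
    intro p h
    obtain ⟨p1, p2, h1, h2, h3⟩ := W_snoc_inv h
    obtain ⟨i1, i2⟩ := ih _ h1
    obtain ⟨e1, e2⟩ := par_eps.1 h3
    cases x with
    | delta =>
      obtain ⟨rfl, _⟩ := h2
      rw [prj_delta, prj_delta]
      exact ⟨W_eps i1 e1, W_eps i2 e2⟩
    | lab ℓ =>
      rcases h2 with ⟨a, b, c, d⟩ | ⟨a, b, c, d⟩ | ⟨a, b, c, d⟩
      · rw [prj_mem _ _ _ a, prj_not_mem _ _ _ b]
        rw [d] at e2
        exact ⟨.snoc i1 c e1, W_eps i2 e2⟩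
      · rw [prj_mem _ _ _ a, prj_not_mem _ _ _ b]
        rw [d] at e1
        exact ⟨W_eps i1 e1, .snoc i2 c e2⟩
      · rw [prj_mem _ _ _ a, prj_mem _ _ _ b]
        exact ⟨.snoc i1 c e1, .snoc i2 d e2⟩

theorem cross {Qs Qe Lab : Type} (s : LTS Qs Lab) (e : LTS Qe Lab)
    (hcomp : Composable s e) (hsclosed : s.UtraceClosed) (heclosed : e.UtraceClosed)
    (σ : List (ELabel Lab)) : ∀ (qs qs' : Qs) (qe qe' : Qe),
    (par s e).W (par s e).q0 σ (qs, qe) → (par s e).W (par s e).q0 σ (qs', qe') →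
      (par s e).W (par s e).q0 σ (qs, qe') := by
  induction σ using List.reverseRecOn with
  | nil =>
    intro qs qs' qe qe' h h'
    exact .nil (par_eps.2 ⟨(par_eps.1 (W_nil_inv h)).1, (par_eps.1 (W_nil_inv h')).2⟩)
  | append_singleton σ x ih =>
    intro qs qs' qe qe' h h'
    obtain ⟨⟨a, b⟩, ⟨c, d⟩, h1, h2, h3⟩ := W_snoc_inv h
    obtain ⟨⟨a', b'⟩, ⟨c', d'⟩, h1', h2', h3'⟩ := W_snoc_inv h'
    have hx := ih _ _ _ _ h1 h1'
    have he : (par s e).Eps (c, d') (qs, qe') :=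
      par_eps.2 ⟨(par_eps.1 h3).1, (par_eps.1 h3').2⟩
    refine .snoc hx ?_ he
    cases x with
    | lab ℓ =>
      simp only [LTS.VStep, par] at h2 h2' ⊢
      tauto
    | delta =>
      obtain ⟨hc, hq, ht⟩ := h2
      obtain ⟨hc', hq', ht'⟩ := h2'
      obtain ⟨rfl, rfl⟩ := Prod.mk.inj hc
      obtain ⟨rfl, rfl⟩ := Prod.mk.inj hc'
      have P := par_proj _ _ h1
      have P' := par_proj _ _ h1'
      have sa : ∀ r, ¬ s.T c none r := fun r hr => ht (r, d) (Or.inl ⟨hr, rfl⟩)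
      have sb : ∀ r, ¬ e.T d none r := fun r hr => ht (c, r) (Or.inr ⟨hr, rfl⟩)
      have sa' : ∀ r, ¬ s.T c' none r := fun r hr => ht' (r, d') (Or.inl ⟨hr, rfl⟩)
      have sb' : ∀ r, ¬ e.T d' none r := fun r hr => ht' (c', r) (Or.inr ⟨hr, rfl⟩)
      refine ⟨rfl, ?_, ?_⟩
      · rintro ℓ hℓ ⟨r, t⟩ hT
        have hdis : ¬ (ℓ ∈ s.U ∧ ℓ ∈ e.U) := fun hh => by
          have : ℓ ∈ s.U ∩ e.U := hh
          rw [hcomp] at this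
          exact this
        by_cases hsU : ℓ ∈ s.U
        · have hsL : ℓ ∈ s.L := Or.inr hsU
          rcases hT with ⟨_, k2, k3, _⟩ | ⟨_, k2, _, _⟩ | ⟨_, k2, k3, k4⟩
          · exact hq ℓ hℓ (r, d) (Or.inl ⟨hsL, k2, k3, rfl⟩)
          · exact k2 hsL
          · have hI : ℓ ∈ e.I := k2.resolve_right fun hh => hdis ⟨hsU, hh⟩
            obtain ⟨r', hr'⟩ := accept_stable heclosed (prj_traceIn _ _) hI P.2 P'.2 k4 sb
            exact hq ℓ hℓ (r, r') (Or.inr (Or.inr ⟨hsL, k2, k3, hr'⟩))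
        · have heU : ℓ ∈ e.U := hℓ.resolve_left hsU
          have heL : ℓ ∈ e.L := Or.inr heU
          rcases hT with ⟨_, k2, k3, _⟩ | ⟨_, k2, k3, _⟩ | ⟨k1, _, k3, k4⟩
          · exact k2 heL
          · exact hq' ℓ hℓ (c', t) (Or.inr (Or.inl ⟨heL, k2, k3, rfl⟩))
          · have hI : ℓ ∈ s.I := k1.resolve_right hsU
            obtain ⟨r', hr'⟩ := accept_stable hsclosed (prj_traceIn _ _) hI P'.1 P.1 k3 sa'
            exact hq' ℓ hℓ (r', t) (Or.inr (Or.inr ⟨k1, heL, hr', k4⟩))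
      · rintro ⟨r, t⟩ (⟨hT, _⟩ | ⟨hT, _⟩)
        · exact sa _ hT
        · exact sb' _ hT

/-- for composable utrace-closed `s`, `e` and
`σ ∈ (L_{s∥e}^δ)*`, reachability of both `q_s ∥ q_e` and `q_s' ∥ q_e'` along
`σ` is equivalent to reachability of both cross pairs. -/
theorem utrace_closed_implies_cartesian_closed {Qs Qe Lab : Type}
    (s : LTS Qs Lab) (e : LTS Qe Lab)
    (hs : s.WellFormed) (he : e.WellFormed)
    (hcomp : Composable s e)
    (hsclosed : s.UtraceClosed) (heclosed : e.UtraceClosed)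
    (σ : List (ELabel Lab)) (hσ : TraceIn (par s e).L σ)
    (qs qs' : Qs) (qe qe' : Qe) :
    ((par s e).W (par s e).q0 σ (qs, qe) ∧
        (par s e).W (par s e).q0 σ (qs', qe')) ↔
      ((par s e).W (par s e).q0 σ (qs, qe') ∧
        (par s e).W (par s e).q0 σ (qs', qe)) := by
  have C := cross s e hcomp hsclosed heclosed σ
  exact ⟨fun h => ⟨C _ _ _ _ h.1 h.2, C _ _ _ _ h.2 h.1⟩,
    fun h => ⟨C _ _ _ _ h.1 h.2, C _ _ _ _ h.2 h.1⟩⟩
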